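/- arXiv:1210.8390 — 2 statements merged into one kernel-verified Lean document; each statement's English description precedes it below -/
import Mathlib

section
/- Let g = (g_1, …, g_d) and f = (f_1, …, f_d) be vectors in ℝ^d with all coordinates strictly positive, and let C_g denote the convex hull of the origin together with the truncations g^1, …, g^d of g. Then f ∈ C_g if and only if f_1 ≤ g_1 and f_i · g_j ≤ f_j · g_i for all 1 ≤ j < i ≤ d. -/
/-!
Truncation commutes with multiplication by `g`, so membership of `f` in `C_g` is membership of the
ratio `f / g` in `C_1`, the hull of the `0`-`1` step functions. That hull consists of the antitone
functions with values in `[0, 1]`: extending such a function by the value `1` on the left and `0`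
on the right, its consecutive drops are the weights of a convex combination of steps.
-/

/-- The `k`-truncation of a vector `g ∈ ℝ^d`: the first `k` coordinates agree with
those of `g`, the remaining coordinates are `0`. (Coordinates are numbered `1, …, d`,
so the `i`-th entry of the vector, `i : Fin d`, is coordinate number `i + 1`.) -/
def trunc {d : ℕ} (g : Fin d → ℝ) (k : ℕ) : Fin d → ℝ :=
  fun i => if (i : ℕ) + 1 ≤ k then g i else 0

open Finset (range)

section OrderedSemifield

variable {ι 𝕜 : Type*} [Semifield 𝕜] [LinearOrder 𝕜] [IsStrictOrderedRing 𝕜]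

theorem antitone_div_iff_forall_mul_le_mul [PartialOrder ι] {f g : ι → 𝕜} (hg : ∀ i, 0 < g i) :
    Antitone (f / g) ↔ ∀ i j, j < i → f i * g j ≤ f j * g i := by
  simp only [antitone_iff_forall_lt, Pi.div_apply, div_le_div_iff₀ (hg _) (hg _)]
  exact forall_comm

theorem div_mem_Icc_zero_one_iff {f g : ι → 𝕜} (hg : ∀ i, 0 < g i) :
    f / g ∈ Set.Icc 0 1 ↔ 0 ≤ f ∧ f ≤ g := by
  simp only [Set.mem_Icc, Pi.le_def, Pi.div_apply, Pi.zero_apply, Pi.one_apply,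
    div_le_one (hg _), le_div_iff₀ (hg _), zero_mul]

theorem le_iff_apply_isBot_le_of_antitone_div [Preorder ι] {f g : ι → 𝕜} (hg : ∀ i, 0 < g i)
    (hfg : Antitone (f / g)) {b : ι} (hb : IsBot b) : f ≤ g ↔ f b ≤ g b := by
  refine ⟨fun h => h b, fun hle i => (div_le_one (hg i)).1 ?_⟩
  exact (hfg (hb i)).trans ((div_le_one (hg b)).2 hle)

end OrderedSemifield

theorem convex_setOf_antitone {ι 𝕜 E : Type*} [Preorder ι] [Semiring 𝕜] [PartialOrder 𝕜]
    [AddCommMonoid E] [PartialOrder E] [IsOrderedAddMonoid E] [SMul 𝕜 E] [PosSMulMono 𝕜 E] :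
    Convex 𝕜 {r : ι → E | Antitone r} :=
  fun _ hx _ hy _ _ ha hb _ _ _ hij =>
    add_le_add (smul_le_smul_of_nonneg_left (hx hij) ha) (smul_le_smul_of_nonneg_left (hy hij) hb)

theorem sum_range_sub_mul_ite_le {R : Type*} [Ring R] (w : ℕ → R) {m n : ℕ} (hmn : m ≤ n) :
    ∑ k ∈ range n, (w k - w (k + 1)) * (if m ≤ k then 1 else 0) = w m - w n := by
  have filter_eq : {k ∈ range n | m ≤ k} = Finset.Ico m n := by
    ext k
    simp [and_comm]
  simp only [mul_ite, mul_one, mul_zero, ← Finset.sum_filter, filter_eq]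
  simpa using congrArg Neg.neg (Finset.sum_Ico_sub w hmn)

theorem sum_sub_smul_mem_convexHull_of_antitone {𝕜 E : Type*} [Field 𝕜] [LinearOrder 𝕜]
    [IsStrictOrderedRing 𝕜] [AddCommGroup E] [Module 𝕜 E] {w : ℕ → 𝕜} (hw : Antitone w)
    (hw₀ : w 0 = 1) {n : ℕ} (hwn : w (n + 1) = 0) (p : ℕ → E) :
    ∑ k ∈ range (n + 1), (w k - w (k + 1)) • p k ∈ convexHull 𝕜 (p '' Set.Iic n) := by
  refine (convex_convexHull 𝕜 _).sum_mem (fun k _ => sub_nonneg.2 (hw k.le_succ)) ?_ fun k hk => ?_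
  · rw [Finset.sum_range_sub', hw₀, hwn, sub_zero]
  · exact subset_convexHull 𝕜 _ ⟨k, Finset.mem_range_succ_iff.1 hk, rfl⟩

theorem exists_antitone_nat_extension {α : Type*} [Preorder α] {d : ℕ} {r : Fin d → α}
    (hr : Antitone r) {a b : α} (hab : a ≤ b) (har : ∀ i, a ≤ r i) (hrb : ∀ i, r i ≤ b) :
    ∃ w : ℕ → α, Antitone w ∧ w 0 = b ∧ (∀ i : Fin d, w (i + 1) = r i) ∧ w (d + 1) = a := by
  let tail (n : ℕ) : α := if hn : n < d then r ⟨n, hn⟩ else a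
  have tail_le (n : ℕ) : tail n ≤ b := by
    by_cases hn : n < d <;> simp [tail, hn, hrb, hab]
  have tail_succ_le (n : ℕ) : tail (n + 1) ≤ tail n := by
    by_cases hn : n + 1 < d
    · simpa [tail, hn, n.lt_succ_self.trans hn] using hr (Fin.mk_le_mk.2 n.le_succ)
    · by_cases hn' : n < d <;> simp [tail, hn, hn', har]
  refine ⟨fun n => n.casesOn b tail, antitone_nat_of_succ_le ?_, rfl, ?_, ?_⟩
  · rintro (_ | n)
    exacts [tail_le 0, tail_succ_le n]
  · simp [tail]
  · simp [tail]

section Trunc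

variable {d : ℕ}

theorem trunc_zero (g : Fin d → ℝ) : trunc g 0 = 0 := by
  ext i
  simp [trunc]

theorem trunc_eq_mul_trunc_one (g : Fin d → ℝ) (k : ℕ) : trunc g k = g * trunc 1 k := by
  ext i
  simp [trunc]

theorem antitone_trunc_one (k : ℕ) : Antitone (trunc (1 : Fin d → ℝ) k) := by
  intro i j hij
  have : (i : ℕ) ≤ j := hij
  simp only [trunc, Pi.one_apply]
  split_ifs <;> first | omega | norm_num

theorem trunc_one_mem_Icc (k : ℕ) : trunc (1 : Fin d → ℝ) k ∈ Set.Icc 0 1 := by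
  constructor <;> intro i <;> by_cases hi : (i : ℕ) + 1 ≤ k <;> simp [trunc, hi]

theorem sum_sub_smul_trunc_one (w : ℕ → ℝ) :
    ∑ k ∈ range (d + 1), (w k - w (k + 1)) • trunc (1 : Fin d → ℝ) k =
      fun i : Fin d => w (i + 1) - w (d + 1) := by
  ext i
  simpa [trunc] using sum_range_sub_mul_ite_le w (Nat.succ_le_succ i.is_lt.le)

theorem zero_union_setOf_trunc_eq_image (g : Fin d → ℝ) :
    {0} ∪ {x | ∃ k, 1 ≤ k ∧ k ≤ d ∧ x = trunc g k} = trunc g '' Set.Iic d := by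
  ext x
  constructor
  · rintro (rfl | ⟨k, -, hk, rfl⟩)
    exacts [⟨0, d.zero_le, trunc_zero g⟩, ⟨k, hk, rfl⟩]
  · rintro ⟨_ | k, hk, rfl⟩
    exacts [.inl (trunc_zero g), .inr ⟨k + 1, k.succ_pos, hk, rfl⟩]

theorem convexHull_trunc_one_image_Iic :
    convexHull ℝ (trunc 1 '' Set.Iic d) = {r : Fin d → ℝ | Antitone r} ∩ Set.Icc 0 1 := by
  apply Set.Subset.antisymm
  · refine convexHull_min ?_ (convex_setOf_antitone.inter (convex_Icc 0 1))
    rintro _ ⟨k, -, rfl⟩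
    exact ⟨antitone_trunc_one k, trunc_one_mem_Icc k⟩
  · rintro r ⟨hr, hr₀, hr₁⟩
    obtain ⟨w, hw, hw₀, hwr, hwd⟩ := exists_antitone_nat_extension hr zero_le_one hr₀ hr₁
    have r_eq : r = ∑ k ∈ range (d + 1), (w k - w (k + 1)) • trunc 1 k := by
      simp only [sum_sub_smul_trunc_one, hwr, hwd, sub_zero]
    rw [r_eq]
    exact sum_sub_smul_mem_convexHull_of_antitone hw hw₀ hwd _

theorem mem_convexHull_trunc_iff_div_mem {g : Fin d → ℝ} (hg : ∀ i, g i ≠ 0) (f : Fin d → ℝ) :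
    f ∈ convexHull ℝ (trunc g '' Set.Iic d) ↔ f / g ∈ convexHull ℝ (trunc 1 '' Set.Iic d) := by
  have image_eq : trunc g '' Set.Iic d = LinearMap.mulLeft ℝ g '' (trunc 1 '' Set.Iic d) := by
    simp only [Set.image_image, LinearMap.mulLeft_apply, ← trunc_eq_mul_trunc_one]
  rw [image_eq, ← LinearMap.image_convexHull]
  constructor
  · rintro ⟨r, hr, rfl⟩
    convert hr
    ext i
    simp [hg i]
  · intro h
    refine ⟨f / g, h, ?_⟩
    ext i
    simp [mul_div_cancel₀, hg i]

end Trunc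

theorem thales_lemma_general (d : ℕ) (hd : 0 < d) (g f : Fin d → ℝ) (hg : ∀ i, 0 < g i) :
    f ∈ convexHull ℝ
        ({0} ∪ {x : Fin d → ℝ | ∃ k, 1 ≤ k ∧ k ≤ d ∧ x = trunc g k}) ↔
      (∀ i, 0 ≤ f i) ∧ f ⟨0, hd⟩ ≤ g ⟨0, hd⟩ ∧
        ∀ i j : Fin d, j < i → f i * g j ≤ f j * g i := by
  rw [zero_union_setOf_trunc_eq_image, mem_convexHull_trunc_iff_div_mem fun i => (hg i).ne',
    convexHull_trunc_one_image_Iic, Set.mem_inter_iff, Set.mem_ofPred_eq,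
    div_mem_Icc_zero_one_iff hg, ← antitone_div_iff_forall_mul_le_mul hg,
    and_comm (a := Antitone (f / g)), and_assoc]
  exact and_congr_right fun _ => and_congr_left fun hfg =>
    le_iff_apply_isBot_le_of_antitone_div hg hfg fun i => Nat.zero_le i

/-- **Thales' Lemma.** Let `g` and `f` be vectors in `ℝ^d` with strictly positive
coordinates, and let `C_g` be the convex hull of the origin together with the
truncations `g^1, …, g^d`. Then `f ∈ C_g` iff `f₁ ≤ g₁` and `fᵢ gⱼ ≤ fⱼ gᵢ` for all
`1 ≤ j < i ≤ d`. -/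
theorem thales_lemma (d : ℕ) (hd : 0 < d) (g f : Fin d → ℝ)
    (hg : ∀ i, 0 < g i) (hf : ∀ i, 0 < f i) :
    f ∈ convexHull ℝ
        ({0} ∪ {x : Fin d → ℝ | ∃ k, 1 ≤ k ∧ k ≤ d ∧ x = trunc g k}) ↔
      f ⟨0, hd⟩ ≤ g ⟨0, hd⟩ ∧ ∀ i j : Fin d, j < i → f i * g j ≤ f j * g i :=
  (thales_lemma_general d hd g f hg).trans (and_iff_right fun i => (hf i).le)
end

section
/- Let G be a finite simple graph, let u, v be distinct nonadjacent vertices of G, and let k ≥ 2. Writing q_k(H) for the ratio c_k(H)/c_{k-1}(H) (compared via cross-multiplication), either q_k(G_{u→v}) is strictly greater than q_k(G), or q_k(G_{v→u}) is strictly greater than q_k(G), or q_k(G_{u→v}) = q_k(G_{v→u}) = q_k(G). In particular, max with respect to cross-multiplied comparison of q_k(G_{u→v}) and q_k(G_{v→u}) is at least q_k(G): c_k(G) · c_{k-1}(G_{u→v}) ≤ c_k(G_{u→v}) · c_{k-1}(G) or c_k(G) · c_{k-1}(G_{v→u}) ≤ c_k(G_{v→u}) · c_{k-1}(G). -/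
/-- The number of `k`-cliques of a graph `G`. -/
noncomputable def cliqueCount {V : Type*} (G : SimpleGraph V) (k : ℕ) : ℕ :=
  {s : Finset V | G.IsNClique k s}.ncard

/-- The graph `G_{u→v}`: delete all edges incident to `u` and join `u` to every
neighbor of `v` in `G`. -/
def redirect {V : Type*} (G : SimpleGraph V) (u v : V) : SimpleGraph V where
  Adj x y :=
    (x ≠ u ∧ y ≠ u ∧ G.Adj x y) ∨ (x = u ∧ y ≠ u ∧ G.Adj v y) ∨
      (y = u ∧ x ≠ u ∧ G.Adj v x)
  symm := by
    refine ⟨?_⟩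
    rintro x y (⟨h1, h2, h3⟩ | ⟨h1, h2, h3⟩ | ⟨h1, h2, h3⟩)
    · exact Or.inl ⟨h2, h1, h3.symm⟩
    · exact Or.inr (Or.inr ⟨h1, h2, h3⟩)
    · exact Or.inr (Or.inl ⟨h1, h2, h3⟩)
  loopless := by
    refine ⟨?_⟩
    rintro x (⟨h1, h2, h3⟩ | ⟨h1, h2, h3⟩ | ⟨h1, h2, h3⟩)
    · exact G.loopless.irrefl x h3
    · exact h2 h1
    · exact h2 h1

/-!
Split the `k`-cliques of a graph according to whether they contain a given vertex. The cliques
avoiding `u` are the same in `G_{u→v}` as in `G`, while the transposition `(u v)` carries the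
cliques of `G_{u→v}` through `u` to the cliques of `G` through `v`. Adding the two symmetric counts
gives `c_k(G_{u→v}) + c_k(G_{v→u}) = 2 c_k(G)` for every `k`. Hence `q_k(G)` is the mediant of
`q_k(G_{u→v})` and `q_k(G_{v→u})`, and so lies between them.
-/

open SimpleGraph

theorem isNClique_map_iff_of_adj_iff {V W : Type*} {G : SimpleGraph V} {H : SimpleGraph W}
    (f : V ↪ W) {s : Finset V} (h : ∀ x ∈ s, ∀ y ∈ s, H.Adj (f x) (f y) ↔ G.Adj x y) (n : ℕ) :
    H.IsNClique n (s.map f) ↔ G.IsNClique n s := by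
  have hclique : H.IsClique (s.map f : Set W) ↔ G.IsClique (s : Set V) := by
    rw [Finset.coe_map, isClique_iff, isClique_iff, f.injective.injOn.pairwise_image]
    exact forall₅_congr fun x hx y hy _ ↦ h x hx y hy
  rw [isNClique_iff, isNClique_iff, hclique, Finset.card_map]

section Redirect

variable {V : Type*} {G : SimpleGraph V} {u v : V}

theorem not_redirect_adj : ¬ (redirect G u v).Adj u v := by
  simp [redirect]

theorem redirect_adj_of_ne {x y : V} (hx : x ≠ u) (hy : y ≠ u) :
    (redirect G u v).Adj x y ↔ G.Adj x y := by
  simp [redirect, hx, hy]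

theorem redirect_adj_left {y : V} (hy : y ≠ u) : (redirect G u v).Adj u y ↔ G.Adj v y := by
  simp [redirect, hy]

theorem adj_swap_iff_redirect_adj [DecidableEq V] {x y : V} (hx : x ≠ v) (hy : y ≠ v) :
    G.Adj (Equiv.swap u v x) (Equiv.swap u v y) ↔ (redirect G u v).Adj x y := by
  by_cases hxu : x = u <;> by_cases hyu : y = u
  · simp [hxu, hyu]
  · rw [hxu, Equiv.swap_apply_left, Equiv.swap_apply_of_ne_of_ne hyu hy, redirect_adj_left hyu]
  · rw [hyu, Equiv.swap_apply_left, Equiv.swap_apply_of_ne_of_ne hxu hx, adj_comm, adj_comm _ x,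
      redirect_adj_left hxu]
  · rw [Equiv.swap_apply_of_ne_of_ne hxu hx, Equiv.swap_apply_of_ne_of_ne hyu hy,
      redirect_adj_of_ne hxu hyu]

theorem isNClique_redirect_iff_of_notMem {s : Finset V} (hu : u ∉ s) (n : ℕ) :
    (redirect G u v).IsNClique n s ↔ G.IsNClique n s := by
  have hne : ∀ x ∈ s, x ≠ u := fun x hx ↦ ne_of_mem_of_not_mem hx hu
  simpa using isNClique_map_iff_of_adj_iff (.refl V)
    (fun x hx y hy ↦ redirect_adj_of_ne (G := G) (v := v) (hne x hx) (hne y hy)) n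

theorem isNClique_map_swap_iff_isNClique_redirect [DecidableEq V] (huv : u ≠ v) (hadj : ¬ G.Adj u v)
    {s : Finset V} (hu : u ∈ s) (n : ℕ) :
    G.IsNClique n (s.map (Equiv.swap u v).toEmbedding) ↔ (redirect G u v).IsNClique n s := by
  by_cases hv : v ∈ s
  · have hu' : u ∈ s.map (Equiv.swap u v).toEmbedding := by simpa [Finset.mem_map_equiv]
    have hv' : v ∈ s.map (Equiv.swap u v).toEmbedding := by simpa [Finset.mem_map_equiv]
    exact iff_of_false (fun h ↦ hadj (h.isClique hu' hv' huv))
      (fun h ↦ not_redirect_adj (h.isClique hu hv huv))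
  · have hne : ∀ x ∈ s, x ≠ v := fun x hx ↦ ne_of_mem_of_not_mem hx hv
    exact isNClique_map_iff_of_adj_iff _
      (fun x hx y hy ↦ adj_swap_iff_redirect_adj (hne x hx) (hne y hy)) n

theorem cliqueSet_redirect_sdiff_mem (n : ℕ) :
    (redirect G u v).cliqueSet n \ {s | u ∈ s} = G.cliqueSet n \ {s | u ∈ s} := by
  ext s
  exact and_congr_left fun hu ↦ isNClique_redirect_iff_of_notMem hu n

theorem encard_cliqueSet_redirect_inter_mem (huv : u ≠ v) (hadj : ¬ G.Adj u v) (n : ℕ) :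
    ((redirect G u v).cliqueSet n ∩ {s | u ∈ s}).encard =
      (G.cliqueSet n ∩ {s | v ∈ s}).encard := by
  classical
  have hpreimage : (redirect G u v).cliqueSet n ∩ {s | u ∈ s} =
      (Equiv.swap u v).finsetCongr ⁻¹' (G.cliqueSet n ∩ {s | v ∈ s}) := by
    ext s
    have hmem : v ∈ s.map (Equiv.swap u v).toEmbedding ↔ u ∈ s := by simp [Finset.mem_map_equiv]
    simp only [Set.mem_inter_iff, Set.mem_preimage, mem_cliqueSet_iff, Set.mem_ofPred_eq,
      Equiv.finsetCongr_apply, hmem]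
    exact and_congr_left fun hu ↦ (isNClique_map_swap_iff_isNClique_redirect huv hadj hu n).symm
  rw [hpreimage, Set.encard_preimage_of_bijective (Equiv.bijective _)]

theorem encard_cliqueSet_redirect (huv : u ≠ v) (hadj : ¬ G.Adj u v) (n : ℕ) :
    ((redirect G u v).cliqueSet n).encard =
      (G.cliqueSet n \ {s | u ∈ s}).encard + (G.cliqueSet n ∩ {s | v ∈ s}).encard := by
  rw [← Set.encard_sdiff_add_encard_inter _ {s | u ∈ s}, cliqueSet_redirect_sdiff_mem,
    encard_cliqueSet_redirect_inter_mem huv hadj]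

theorem encard_cliqueSet_redirect_add_redirect (huv : u ≠ v) (hadj : ¬ G.Adj u v) (n : ℕ) :
    ((redirect G u v).cliqueSet n).encard + ((redirect G v u).cliqueSet n).encard =
      2 * (G.cliqueSet n).encard := by
  have hadj' : ¬ G.Adj v u := fun h ↦ hadj h.symm
  calc
    _ = ((G.cliqueSet n \ {s | u ∈ s}).encard + (G.cliqueSet n ∩ {s | v ∈ s}).encard) +
          ((G.cliqueSet n \ {s | v ∈ s}).encard + (G.cliqueSet n ∩ {s | u ∈ s}).encard) := by
      rw [encard_cliqueSet_redirect huv hadj, encard_cliqueSet_redirect huv.symm hadj']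
    _ = ((G.cliqueSet n \ {s | u ∈ s}).encard + (G.cliqueSet n ∩ {s | u ∈ s}).encard) +
          ((G.cliqueSet n \ {s | v ∈ s}).encard + (G.cliqueSet n ∩ {s | v ∈ s}).encard) := by
      ac_rfl
    _ = 2 * (G.cliqueSet n).encard := by
      rw [Set.encard_sdiff_add_encard_inter, Set.encard_sdiff_add_encard_inter, two_mul]

theorem cliqueCount_redirect_add_redirect (huv : u ≠ v) (hadj : ¬ G.Adj u v) {n : ℕ}
    (hfin : (G.cliqueSet n).Finite) :
    cliqueCount (redirect G u v) n + cliqueCount (redirect G v u) n = 2 * cliqueCount G n := by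
  have hsum := encard_cliqueSet_redirect_add_redirect huv hadj n
  have hsum_ne_top : ((redirect G u v).cliqueSet n).encard +
      ((redirect G v u).cliqueSet n).encard ≠ ⊤ :=
    hsum ▸ WithTop.mul_ne_top (ENat.natCast_ne_top 2) hfin.encard_lt_top.ne
  obtain ⟨huv_ne_top, hvu_ne_top⟩ := WithTop.add_ne_top.mp hsum_ne_top
  have htoNat := congrArg ENat.toNat hsum
  rw [ENat.toNat_add huv_ne_top hvu_ne_top, ENat.toNat_mul] at htoNat
  exact htoNat

end Redirect

theorem redirect_ratio_max_general {V : Type*} (G : SimpleGraph V) (u v : V)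
    (huv : u ≠ v) (hadj : ¬ G.Adj u v) (k l : ℕ) (hkfin : (G.cliqueSet k).Finite)
    (hlfin : (G.cliqueSet l).Finite) :
    (cliqueCount G k * cliqueCount (redirect G u v) l <
        cliqueCount (redirect G u v) k * cliqueCount G l ∨
      cliqueCount G k * cliqueCount (redirect G v u) l <
        cliqueCount (redirect G v u) k * cliqueCount G l ∨
      (cliqueCount (redirect G u v) k * cliqueCount G l =
          cliqueCount G k * cliqueCount (redirect G u v) l ∧
        cliqueCount (redirect G v u) k * cliqueCount G l =
          cliqueCount G k * cliqueCount (redirect G v u) l)) ∧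
    (cliqueCount G k * cliqueCount (redirect G u v) l ≤
        cliqueCount (redirect G u v) k * cliqueCount G l ∨
      cliqueCount G k * cliqueCount (redirect G v u) l ≤
        cliqueCount (redirect G v u) k * cliqueCount G l) := by
  have hsum : cliqueCount (redirect G u v) k * cliqueCount G l +
      cliqueCount (redirect G v u) k * cliqueCount G l =
      cliqueCount G k * cliqueCount (redirect G u v) l +
      cliqueCount G k * cliqueCount (redirect G v u) l := by
    rw [← add_mul, ← mul_add, cliqueCount_redirect_add_redirect huv hadj hkfin,
      cliqueCount_redirect_add_redirect huv hadj hlfin]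
    ring
  omega

/-- With `q_k(H) = c_k(H)/c_{k-1}(H)` compared via cross-multiplication: for distinct
nonadjacent vertices `u, v` of a finite graph `G` and `k ≥ 2`, either
`q_k(G_{u→v}) > q_k(G)`, or `q_k(G_{v→u}) > q_k(G)`, or
`q_k(G_{u→v}) = q_k(G_{v→u}) = q_k(G)`.  In particular
`q_k(G_{u→v}) ≥ q_k(G)` or `q_k(G_{v→u}) ≥ q_k(G)`. -/
theorem redirect_ratio_max {V : Type*} [Fintype V] (G : SimpleGraph V) (u v : V)
    (huv : u ≠ v) (hadj : ¬ G.Adj u v) (k : ℕ) (hk : 2 ≤ k) :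
    (cliqueCount G k * cliqueCount (redirect G u v) (k - 1) <
        cliqueCount (redirect G u v) k * cliqueCount G (k - 1) ∨
      cliqueCount G k * cliqueCount (redirect G v u) (k - 1) <
        cliqueCount (redirect G v u) k * cliqueCount G (k - 1) ∨
      (cliqueCount (redirect G u v) k * cliqueCount G (k - 1) =
          cliqueCount G k * cliqueCount (redirect G u v) (k - 1) ∧
        cliqueCount (redirect G v u) k * cliqueCount G (k - 1) =
          cliqueCount G k * cliqueCount (redirect G v u) (k - 1))) ∧
    (cliqueCount G k * cliqueCount (redirect G u v) (k - 1) ≤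
        cliqueCount (redirect G u v) k * cliqueCount G (k - 1) ∨
      cliqueCount G k * cliqueCount (redirect G v u) (k - 1) ≤
        cliqueCount (redirect G v u) k * cliqueCount G (k - 1)) :=
  redirect_ratio_max_general G u v huv hadj k (k - 1) (Set.toFinite _) (Set.toFinite _)
end
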